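/- Let M be a positive integer. Suppose a, b, c, d, q₁, q₂ are integers with c > b ≥ 1, a > 2c, 0 < q₁ < q₂, gcd(q₁, q₂) = 1, q₂ divides a − c, and d = (M + q₁/q₂)·(a − c) + b. Then a > c > 0, ad − bc > 0, and there exists a real number s₀ > 1 such that σ_s(an+b) < σ_s(cn+d) for all real s ≥ s₀ and all integers n with 1 ≤ n ≤ M, and σ_s(an+b) > σ_s(cn+d) for all real s ≥ s₀ and all integers n ≥ M + 1. -/

import Mathlib

/-!
With `a - c = q₂ t`, the definition of `d` reads `d = M (a - c) + q₁ t + b`, where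
`0 < q₁ t < a - c`. Hence `(an + b) - (cn + d) = (a - c)(n - M) - q₁ t` is negative for `n ≤ M`
and positive for `n > M`. Moreover the ratio of the larger of `an + b`, `cn + d` to the smaller is at
least `1 + 1/K` for a constant `K` independent of `n`: only finitely many values `n ≤ M` occur, and
for `n > M` the difference grows at least as fast as `n - M` while `cn + d` grows linearly.

It remains to see that `σ_s` preserves such a uniform gap for large `s` (`sigmaR_lt_of_gap`). Indeed
`k^s ≤ σ_s(k) = k^s ∑_{e ∣ k} e^{-s} ≤ 2 k^s` for `s ≥ 2` (`sigmaR_le`), and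
`(1 + 1/K)^s ≥ 1 + s/K > 2` for `s > K` by Bernoulli's inequality.
-/

/-- `σ_s(n) = ∑_{d ∣ n} d^s` over the positive divisors of `n`. -/
noncomputable def sigmaR (s : ℝ) (n : ℕ) : ℝ := ∑ d ∈ n.divisors, (d : ℝ) ^ s

theorem sum_inv_sq_le (k : ℕ) :
    ∑ e ∈ Finset.Icc 1 (k + 1), ((e : ℝ) ^ 2)⁻¹ ≤ 2 - 1 / ((k : ℝ) + 1) := by
  induction k with
  | zero => norm_num
  | succ k ih =>
    rw [Finset.sum_Icc_succ_top (by omega)]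
    have h : (((k : ℝ) + 1 + 1) ^ 2)⁻¹ ≤ 1 / ((k : ℝ) + 1) - 1 / ((k : ℝ) + 1 + 1) := by
      rw [div_sub_div _ _ (by positivity) (by positivity), inv_eq_one_div,
        div_le_div_iff₀ (by positivity) (by positivity)]
      nlinarith [(Nat.cast_nonneg k : (0 : ℝ) ≤ k)]
    push_cast
    linarith

theorem sigmaR_le (s : ℝ) (hs : 2 ≤ s) (k : ℕ) (hk : 0 < k) :
    sigmaR s k ≤ 2 * (k : ℝ) ^ s := by
  unfold sigmaR
  rw [← Nat.sum_div_divisors k (fun e => (e : ℝ) ^ s)]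
  calc ∑ e ∈ k.divisors, (((k / e : ℕ) : ℝ)) ^ s
      ≤ ∑ e ∈ k.divisors, (k : ℝ) ^ s * ((e : ℝ) ^ 2)⁻¹ := by
        refine Finset.sum_le_sum fun e he => ?_
        have hdvd := Nat.dvd_of_mem_divisors he
        have he1 : 1 ≤ e := Nat.pos_of_mem_divisors he
        have he1' : (1 : ℝ) ≤ e := by exact_mod_cast he1
        rw [Nat.cast_div hdvd (by positivity), Real.div_rpow (by positivity) (by positivity),
          div_eq_mul_inv]
        gcongr
        rw [← Real.rpow_natCast]
        exact Real.rpow_le_rpow_of_exponent_le he1' (by exact_mod_cast hs)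
    _ = (k : ℝ) ^ s * ∑ e ∈ k.divisors, ((e : ℝ) ^ 2)⁻¹ := by rw [Finset.mul_sum]
    _ ≤ (k : ℝ) ^ s * 2 := by
        gcongr
        obtain ⟨j, rfl⟩ : ∃ j, k = j + 1 := ⟨k - 1, by omega⟩
        calc ∑ e ∈ (j + 1).divisors, ((e : ℝ) ^ 2)⁻¹
            ≤ ∑ e ∈ Finset.Icc 1 (j + 1), ((e : ℝ) ^ 2)⁻¹ := by
              refine Finset.sum_le_sum_of_subset_of_nonneg ?_ (fun _ _ _ => by positivity)
              intro e he
              exact Finset.mem_Icc.2 ⟨Nat.pos_of_mem_divisors he, Nat.divisor_le he⟩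
          _ ≤ 2 - 1 / ((j : ℝ) + 1) := sum_inv_sq_le j
          _ ≤ 2 := by
              have : 0 ≤ 1 / ((j : ℝ) + 1) := by positivity
              linarith
    _ = 2 * (k : ℝ) ^ s := mul_comm _ _

/-- The gap hypothesis says `m ≥ (1 + 1/K) k`; the threshold for `s` depends on `K` only. -/
theorem sigmaR_lt_of_gap (K : ℕ) (hK : 0 < K) (s : ℝ) (hs : (K : ℝ) + 2 ≤ s) (k m : ℕ)
    (hk : 0 < k) (hgap : (K + 1) * k ≤ K * m) : sigmaR s k < sigmaR s m := by
  have hK' : (0 : ℝ) < K := by exact_mod_cast hK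
  have hk' : (0 : ℝ) < k := by exact_mod_cast hk
  have hm : 0 < m := by
    rcases Nat.eq_zero_or_pos m with rfl | h
    · have : 0 < (K + 1) * k := by positivity
      omega
    · exact h
  have hratio : (1 + 1 / (K : ℝ)) * k ≤ m := by
    have h : ((K : ℝ) + 1) * k ≤ K * m := by exact_mod_cast hgap
    rw [show (1 + 1 / (K : ℝ)) * k = ((K : ℝ) + 1) * k / K by field_simp,
      div_le_iff₀ hK']
    linarith
  have hbern : 1 + s * (1 / (K : ℝ)) ≤ (1 + 1 / (K : ℝ)) ^ s :=
    one_add_mul_self_le_rpow_one_add (by have : 0 < 1 / (K : ℝ) := by positivity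
                                         linarith) (by linarith)
  have htwo : 2 < (1 + 1 / (K : ℝ)) ^ s := by
    have : 1 < s * (1 / (K : ℝ)) := by
      rw [mul_one_div, lt_div_iff₀ hK']
      linarith
    linarith
  calc sigmaR s k ≤ 2 * (k : ℝ) ^ s := sigmaR_le s (by linarith) k hk
    _ < (1 + 1 / (K : ℝ)) ^ s * (k : ℝ) ^ s := by gcongr
    _ = ((1 + 1 / (K : ℝ)) * k) ^ s := (Real.mul_rpow (by positivity) hk'.le).symm
    _ ≤ (m : ℝ) ^ s := Real.rpow_le_rpow (by positivity) hratio (by linarith)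
    _ ≤ sigmaR s m :=
        Finset.single_le_sum (f := fun e : ℕ => (e : ℝ) ^ s) (fun _ _ => by positivity)
          (Nat.mem_divisors_self m hm.ne')

theorem stmt_16 (M : ℕ) (hM : 0 < M) (a b c d q₁ q₂ : ℕ)
    (hcb : c > b) (hb : 1 ≤ b) (ha : a > 2 * c)
    (hq₁ : 0 < q₁) (hq : q₁ < q₂) (hcop : Nat.gcd q₁ q₂ = 1)
    (hdvd : q₂ ∣ a - c)
    (hdef : (d : ℝ) = ((M : ℝ) + (q₁ : ℝ) / (q₂ : ℝ)) * ((a : ℝ) - c) + b) :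
    a > c ∧ c > 0 ∧ (a : ℤ) * d - (b : ℤ) * c > 0 ∧
    ∃ s₀ : ℝ, 1 < s₀ ∧
      (∀ s : ℝ, s₀ ≤ s → ∀ n : ℕ, 1 ≤ n → n ≤ M →
        sigmaR s (a * n + b) < sigmaR s (c * n + d)) ∧
      (∀ s : ℝ, s₀ ≤ s → ∀ n : ℕ, M + 1 ≤ n →
        sigmaR s (a * n + b) > sigmaR s (c * n + d)) := by
  obtain ⟨t, ht⟩ := hdvd
  have hat : a = c + q₂ * t := by omega
  have htpos : 0 < t := by
    rcases Nat.eq_zero_or_pos t with rfl | h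
    · simp at ht; omega
    · exact h
  have hd : d = M * (q₂ * t) + q₁ * t + b := by
    have hq₂ : (q₂ : ℝ) ≠ 0 := by
      have : 0 < q₂ := by omega
      positivity
    rw [hat] at hdef
    push_cast at hdef
    have h : (d : ℝ) = M * (q₂ * t) + q₁ * t + b := by
      rw [hdef]
      field_simp
      ring
    exact_mod_cast h
  have hlt : q₁ * t < q₂ * t := Nat.mul_lt_mul_of_pos_right hq htpos
  have hpos : 0 < q₁ * t := Nat.mul_pos hq₁ htpos
  generalize q₁ * t = r at *
  generalize q₂ * t = e at *
  clear hdef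
  refine ⟨by omega, by omega, ?_, ?_⟩
  · have hbd : b < d := by
      rw [hd]; omega
    have h : b * c < a * d := by
      calc b * c < d * c := Nat.mul_lt_mul_of_pos_right hbd (by omega)
        _ ≤ d * a := Nat.mul_le_mul_left _ (by omega)
        _ = a * d := mul_comm _ _
    have : (b : ℤ) * c < a * d := by exact_mod_cast h
    linarith
  -- `K` bounds `an + b` for `n ≤ M`, and bounds `cn + d` at `n = M + 1`.
  obtain ⟨K, hK⟩ : ∃ K, K = (a * M + b) + (c * (M + 1) + d) := ⟨_, rfl⟩
  have hKpos : 0 < K := by omega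
  refine ⟨K + 2, ?_, ?_, ?_⟩
  · have : (0 : ℝ) < K := by exact_mod_cast hKpos
    linarith
  · intro s hs n hn hnM
    refine sigmaR_lt_of_gap K hKpos s hs _ _ (by omega) ?_
    have hle : a * n + b ≤ K := by
      have := Nat.mul_le_mul_left a hnM
      omega
    have hdiff : a * n + b + 1 ≤ c * n + d := by
      have h1 := Nat.mul_le_mul_left e hnM
      rw [hd, hat]
      nlinarith
    calc (K + 1) * (a * n + b) = K * (a * n + b) + (a * n + b) := by ring
      _ ≤ K * (a * n + b) + K := by omega
      _ = K * (a * n + b + 1) := by ring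
      _ ≤ K * (c * n + d) := Nat.mul_le_mul_left _ hdiff
  · intro s hs n hn
    refine sigmaR_lt_of_gap K hKpos s hs _ _ (by omega) ?_
    obtain ⟨j, rfl⟩ : ∃ j, n = M + 1 + j := ⟨n - (M + 1), by omega⟩
    have he : 1 ≤ e := by omega
    -- The difference is at least `1 + j`, whereas `cn + d = (c(M+1) + d) + cj ≤ K (1 + j)`.
    have hdiff : c * (M + 1 + j) + d + (1 + j) ≤ a * (M + 1 + j) + b := by
      have h1 : j ≤ e * j := Nat.le_mul_of_pos_left j he
      rw [hd, hat]
      nlinarith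
    have hle : c * (M + 1 + j) + d ≤ K * (1 + j) := by
      have h1 : c * (M + 1) + d ≤ K := by omega
      have h2 : c ≤ K := by nlinarith
      have h3 := Nat.mul_le_mul_right j h2
      nlinarith
    calc (K + 1) * (c * (M + 1 + j) + d)
        = K * (c * (M + 1 + j) + d) + (c * (M + 1 + j) + d) := by ring
      _ ≤ K * (c * (M + 1 + j) + d) + K * (1 + j) := by omega
      _ = K * (c * (M + 1 + j) + d + (1 + j)) := by ring
      _ ≤ K * (a * (M + 1 + j) + b) := Nat.mul_le_mul_left _ hdiff
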